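/- Let p and q be integers with 2 ≤ p ≤ q and m = gcd(p,q) < p (i.e. p does not divide q), and write q = kp + r with 0 < r < p. Set ν = (p−1)(q−1). Then ν is attainable from T = {(p,0),(0,q)}, and every integer n with ν − r(p−r) ≤ n ≤ ν − m is attainable from T. -/

import Mathlib

open Pointwise MeasureTheory

/-- The Newton polyhedron `Γ₊(T)`: the Minkowski sum of the convex hull of the
(real images of the) lattice points of `T` with the nonnegative quadrant. -/
noncomputable def GammaPlus (T : Finset (ℕ × ℕ)) : Set (ℝ × ℝ) :=
  convexHull ℝ ((fun v : ℕ × ℕ => ((v.1 : ℝ), (v.2 : ℝ))) '' (T : Set (ℕ × ℕ))) +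
    {v : ℝ × ℝ | 0 ≤ v.1 ∧ 0 ≤ v.2}

/-- `a(T)`: the smallest `x` with `(x,0) ∈ Γ₊(T)`. -/
noncomputable def axisA (T : Finset (ℕ × ℕ)) : ℝ :=
  sInf {x : ℝ | (x, (0 : ℝ)) ∈ GammaPlus T}

/-- `b(T)`: the smallest `y` with `(0,y) ∈ Γ₊(T)`. -/
noncomputable def axisB (T : Finset (ℕ × ℕ)) : ℝ :=
  sInf {y : ℝ | ((0 : ℝ), y) ∈ GammaPlus T}

/-- `S(T)`: the Lebesgue area of the part of the nonnegative quadrant not in `Γ₊(T)`. -/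
noncomputable def areaS (T : Finset (ℕ × ℕ)) : ℝ :=
  (volume ({v : ℝ × ℝ | 0 ≤ v.1 ∧ 0 ≤ v.2} \ GammaPlus T)).toReal

/-- The Newton number `ν(T) = 2 S(T) - a(T) - b(T) + 1`. -/
noncomputable def newtonNumber (T : Finset (ℕ × ℕ)) : ℝ :=
  2 * areaS T - axisA T - axisB T + 1

/-- An integer `n` is attainable from `T` if `n = ν(T ∪ P)` for some finite `P ⊆ ℕ²`. -/
def Attainable (T : Finset (ℕ × ℕ)) (n : ℤ) : Prop :=
  ∃ P : Finset (ℕ × ℕ), (n : ℝ) = newtonNumber (T ∪ P)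

/-!
Let a descending convex lattice path from `(0, H)` to `(W, 0)` bound the Newton polyhedron of its
vertices. Decomposing the area below it into pairs of edges shows that its Newton number is
`(W - 1) * (H - 1)` minus twice the area between the path and its chord. For `(W, H) = (p, q)`, a
unimodular map takes the convex lattice paths from `(0, 0)` to `(r, p - r)` to such descending
paths, preserving areas. So it suffices that twice the area between a convex lattice path to
`(a, b)` and its chord can be any integer between `gcd a b` and `a * b`. This follows by a Euclidean
induction: a shear takes paths to `(a - b, b)` to paths to `(a, b)`, which covers the small areas,
and prepending the edge `(1, 0)` to a path to `(a - 1, b)` adds `b`, which covers the large ones.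
-/

section NewtonPolyhedron

variable {T : Finset (ℕ × ℕ)}

lemma convex_gammaPlus (T : Finset (ℕ × ℕ)) : Convex ℝ (GammaPlus T) :=
  (convex_convexHull ℝ _).add (convex_Ici (0 : ℝ × ℝ))

lemma isUpperSet_gammaPlus (T : Finset (ℕ × ℕ)) : IsUpperSet (GammaPlus T) := by
  rintro _ w hvw ⟨t, ht, u, hu, rfl⟩
  exact ⟨t, ht, w - t, sub_nonneg.2 ((le_add_of_nonneg_right (show 0 ≤ u from hu)).trans hvw),
    add_sub_cancel _ _⟩

lemma mem_gammaPlus {w : ℕ × ℕ} (hw : w ∈ T) : ((w.1 : ℝ), (w.2 : ℝ)) ∈ GammaPlus T :=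
  ⟨_, subset_convexHull ℝ _ ⟨w, hw, rfl⟩, 0, by simp, add_zero _⟩

lemma gammaPlus_subset {C : Set (ℝ × ℝ)} (hC : Convex ℝ C) (hCu : IsUpperSet C)
    (hT : ∀ w ∈ T, ((w.1 : ℝ), (w.2 : ℝ)) ∈ C) : GammaPlus T ⊆ C := by
  rintro _ ⟨t, ht, u, hu, rfl⟩
  refine hCu (le_add_of_nonneg_right (show 0 ≤ u from hu)) (convexHull_min ?_ hC ht)
  rintro _ ⟨w, hw, rfl⟩
  exact hT w hw

end NewtonPolyhedron

lemma measureReal_prod_subgraph {α : Type*} [MeasurableSpace α] (μ : Measure α) {s : Set α}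
    (hs : MeasurableSet s) {f : α → ℝ} (hf : Measurable f) (hf0 : 0 ≤ f) :
    (μ.prod volume).real {v : α × ℝ | v.1 ∈ s ∧ v.2 ∈ Set.Ico 0 (f v.1)} = ∫ x in s, f x ∂μ := by
  have hmeas : MeasurableSet {v : α × ℝ | v.1 ∈ s ∧ v.2 ∈ Set.Ico 0 (f v.1)} :=
    measurableSet_region_between_co measurable_zero hf hs
  have hfib (x : α) : volume (Prod.mk x ⁻¹' {v : α × ℝ | v.1 ∈ s ∧ v.2 ∈ Set.Ico 0 (f v.1)}) =
      s.indicator (fun x => ENNReal.ofReal (f x)) x := by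
    by_cases hx : x ∈ s
    · have hIco : volume {y | 0 ≤ y ∧ y < f x} = ENNReal.ofReal (f x - 0) := Real.volume_Ico
      simpa [hx] using hIco
    · simp [hx]
  rw [integral_eq_lintegral_of_nonneg_ae (.of_forall hf0) hf.aestronglyMeasurable,
    ← lintegral_indicator hs, measureReal_def, Measure.prod_apply hmeas]
  simp only [hfib]

/-- The determinant of two plane integer vectors. -/
def cross (e f : ℕ × ℕ) : ℤ :=
  e.1 * f.2 - e.2 * f.1

/-- Twice the signed area between the chord and the lattice path with successive edges `l`, counted
positively where the path turns counterclockwise: the sum of `cross e f` over all pairs of edges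
`e` preceding `f`. -/
def chordArea : List (ℕ × ℕ) → ℤ
  | [] => 0
  | e :: l => cross e l.sum + chordArea l

/-- The list of edges of a lattice path that never turns clockwise. -/
structure IsConvexPath (l : List (ℕ × ℕ)) : Prop where
  ne_zero : ∀ e ∈ l, e ≠ 0
  cross_nonneg : l.Pairwise fun e f => 0 ≤ cross e f

/-- Some convex lattice path from the origin to `v` encloses twice the area `d` with its chord. -/
def HasConvexPath (v : ℕ × ℕ) (d : ℤ) : Prop :=
  ∃ l, IsConvexPath l ∧ l.sum = v ∧ chordArea l = d

/-- Convex lattice paths from the origin to `v` enclose with their chord all the areas from the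
smallest positive one (twice the area of a lattice triangle with side `v` is a multiple of
`gcd v.1 v.2`) to the largest, that of the right triangle below the chord. -/
def HasAllConvexPaths (v : ℕ × ℕ) : Prop :=
  ∀ d : ℤ, (v.1.gcd v.2 : ℤ) ≤ d → d ≤ (v.1 : ℤ) * v.2 → HasConvexPath v d

/-- The additive map of `ℕ × ℕ` with matrix `!![a, b; c, d]`. -/
def matrixHom (a b c d : ℕ) : ℕ × ℕ →+ ℕ × ℕ :=
  (a • AddMonoidHom.fst ℕ ℕ + b • AddMonoidHom.snd ℕ ℕ).prod
    (c • AddMonoidHom.fst ℕ ℕ + d • AddMonoidHom.snd ℕ ℕ)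

section Paths

variable {a b c d : ℕ} {v : ℕ × ℕ} {n : ℤ}

lemma matrixHom_apply (v : ℕ × ℕ) :
    matrixHom a b c d v = (a * v.1 + b * v.2, c * v.1 + d * v.2) := by
  simp [matrixHom]

lemma matrixHom_ne_zero (hdet : (a : ℤ) * d - b * c ≠ 0) (hv : v ≠ 0) :
    matrixHom a b c d v ≠ 0 := by
  contrapose! hv
  obtain ⟨x, y⟩ := v
  rw [matrixHom_apply, Prod.mk_eq_zero] at hv
  zify at hv
  have hx : ((a : ℤ) * d - b * c) * x = 0 := by linear_combination d * hv.1 - b * hv.2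
  have hy : ((a : ℤ) * d - b * c) * y = 0 := by linear_combination a * hv.2 - c * hv.1
  simpa [hdet] using And.intro hx hy

lemma cross_swap (e f : ℕ × ℕ) : cross f e = -cross e f := by
  simp only [cross]
  ring

lemma cross_matrixHom (e f : ℕ × ℕ) :
    cross (matrixHom a b c d e) (matrixHom a b c d f) = ((a : ℤ) * d - b * c) * cross e f := by
  simp only [cross, matrixHom_apply]
  push_cast
  ring

lemma chordArea_map_matrixHom (l : List (ℕ × ℕ)) :
    chordArea (l.map (matrixHom a b c d)) = ((a : ℤ) * d - b * c) * chordArea l := by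
  induction l with
  | nil => simp [chordArea]
  | cons e l ih =>
    rw [List.map_cons, chordArea, ← map_list_sum, cross_matrixHom, ih, chordArea, mul_add]

lemma chordArea_append (l₁ l₂ : List (ℕ × ℕ)) :
    chordArea (l₁ ++ l₂) = chordArea l₁ + chordArea l₂ + cross l₁.sum l₂.sum := by
  induction l₁ with
  | nil => simp [chordArea, cross]
  | cons e l₁ ih =>
    simp only [List.cons_append, chordArea, ih, cross, List.sum_append, List.sum_cons,
      Prod.fst_add, Prod.snd_add]
    push_cast
    ring

lemma chordArea_reverse (l : List (ℕ × ℕ)) : chordArea l.reverse = -chordArea l := by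
  induction l with
  | nil => simp [chordArea]
  | cons e l ih =>
    simp only [List.reverse_cons, chordArea_append, ih, chordArea, cross, List.sum_reverse,
      List.sum_singleton, List.sum_nil, Prod.fst_zero, Prod.snd_zero]
    push_cast
    ring

lemma hasConvexPath_zero (v : ℕ × ℕ) : HasConvexPath v 0 := by
  rcases eq_or_ne v 0 with rfl | hv
  · exact ⟨[], ⟨by simp, by simp⟩, by simp, rfl⟩
  · exact ⟨[v], ⟨by simpa using hv, by simp⟩, by simp, by simp [chordArea, cross]⟩

lemma hasConvexPath_cross {e f : ℕ × ℕ} (he : e ≠ 0) (hf : f ≠ 0) (hef : 0 ≤ cross e f) :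
    HasConvexPath (e + f) (cross e f) :=
  ⟨[e, f], ⟨by simp [he, hf], by simpa using hef⟩, by simp, by simp [chordArea, cross]⟩

lemma HasConvexPath.horizontal_add (h : HasConvexPath v n) :
    HasConvexPath ((1, 0) + v) (v.2 + n) := by
  obtain ⟨l, hl, rfl, rfl⟩ := h
  refine ⟨(1, 0) :: l, ⟨?_, ?_⟩, by simp, by simp [chordArea, cross]⟩
  · simpa using hl.ne_zero
  · exact List.pairwise_cons.2 ⟨by simp [cross], hl.cross_nonneg⟩

lemma HasConvexPath.matrixHom_of_det_pos (hdet : 0 < (a : ℤ) * d - b * c)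
    (h : HasConvexPath v n) :
    HasConvexPath (matrixHom a b c d v) (((a : ℤ) * d - b * c) * n) := by
  obtain ⟨l, hl, rfl, rfl⟩ := h
  refine ⟨l.map (matrixHom a b c d), ⟨?_, ?_⟩, (map_list_sum _ _).symm,
    chordArea_map_matrixHom l⟩
  · exact List.forall_mem_map.2 fun e he => matrixHom_ne_zero hdet.ne' (hl.ne_zero e he)
  · rw [List.pairwise_map]
    refine hl.cross_nonneg.imp fun hef => ?_
    rw [cross_matrixHom]
    exact mul_nonneg hdet.le hef

lemma HasConvexPath.matrixHom_of_det_neg (hdet : (a : ℤ) * d - b * c < 0)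
    (h : HasConvexPath v n) :
    HasConvexPath (matrixHom a b c d v) (-(((a : ℤ) * d - b * c) * n)) := by
  obtain ⟨l, hl, rfl, rfl⟩ := h
  refine ⟨(l.map (matrixHom a b c d)).reverse, ⟨?_, ?_⟩, ?_, ?_⟩
  · simp only [List.mem_reverse]
    exact List.forall_mem_map.2 fun e he => matrixHom_ne_zero hdet.ne (hl.ne_zero e he)
  · rw [List.pairwise_reverse, List.pairwise_map]
    refine hl.cross_nonneg.imp fun hef => ?_
    rw [cross_swap, cross_matrixHom]
    exact neg_nonneg.2 (mul_nonpos_of_nonpos_of_nonneg hdet.le hef)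
  · rw [List.sum_reverse, map_list_sum]
  · rw [chordArea_reverse, chordArea_map_matrixHom]

lemma HasConvexPath.shear (h : HasConvexPath (a, b) n) : HasConvexPath (a + b, b) n := by
  simpa [matrixHom_apply] using h.matrixHom_of_det_pos (a := 1) (b := 1) (c := 0) (d := 1) (by simp)

lemma HasConvexPath.swap (h : HasConvexPath (a, b) n) : HasConvexPath (b, a) n := by
  simpa [matrixHom_apply] using h.matrixHom_of_det_neg (a := 0) (b := 1) (c := 1) (d := 0) (by simp)

lemma HasAllConvexPaths.swap (h : HasAllConvexPaths (a, b)) : HasAllConvexPaths (b, a) :=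
  fun n hn hn' => (h n (by rwa [Nat.gcd_comm]) (by rwa [mul_comm])).swap

lemma hasAllConvexPaths_zero_right (a : ℕ) : HasAllConvexPaths (a, 0) := by
  intro n hn hn'
  obtain rfl : n = 0 := by
    simp only [Nat.gcd_zero_right, Nat.cast_zero, mul_zero] at hn hn'
    omega
  exact hasConvexPath_zero _

lemma HasAllConvexPaths.diagonal (h : HasAllConvexPaths (b, b + 1)) :
    HasAllConvexPaths (b + 1, b + 1) := by
  intro n hn hn'
  simp only [Nat.gcd_self] at hn
  have hrest : HasConvexPath (b, b + 1) (n - (b + 1 : ℕ)) := by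
    rcases hn.eq_or_lt with hn | hn
    · simpa [hn] using hasConvexPath_zero (b, b + 1)
    · refine h _ ?_ ?_
      · simp only [Nat.gcd_self_add_right, Nat.gcd_one_right, Nat.cast_one]
        omega
      · push_cast at hn' ⊢
        linarith
  simpa [add_comm 1 b] using hrest.horizontal_add

-- For `b < n < 2 * b`, neither shearing a path to `(1, b)` nor prepending the edge `(1, 0)` to a
-- path to `(b, b)` works.
lemma hasConvexPath_succ_self (hbn : (b : ℤ) < n) (hn : n ≤ 2 * b) :
    HasConvexPath (b + 1, b) n := by
  obtain ⟨y, rfl⟩ : ∃ y : ℕ, n = b + 1 + y := ⟨(n - b - 1).toNat, by omega⟩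
  obtain ⟨z, rfl⟩ : ∃ z, b = z + (y + 1) := Nat.exists_eq_add_of_le' (by omega)
  have hcross : cross (z + 2, z) (y, y + 1) = (z + (y + 1) : ℕ) + 1 + y := by
    simp only [cross]
    push_cast
    ring
  have h := hasConvexPath_cross (e := (z + 2, z)) (f := (y, y + 1)) (by simp) (by simp)
    (by rw [hcross]; positivity)
  rw [hcross] at h
  simpa [add_assoc, add_comm, add_left_comm] using h

lemma HasAllConvexPaths.offDiagonal (hb : 0 < b) (h : HasAllConvexPaths (c + 1, b))
    (h' : HasAllConvexPaths (b + c, b)) : HasAllConvexPaths (b + c + 1, b) := by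
  intro n hn hn'
  rcases le_or_gt n ((c + 1 : ℕ) * (b : ℤ)) with hsmall | hlarge
  · have := (h n (by simpa [add_assoc] using hn) hsmall).shear
    rwa [show c + 1 + b = b + c + 1 by ring] at this
  have hshort (hgcd : (Nat.gcd (b + c) b : ℤ) ≤ n - b) : HasConvexPath (b + c + 1, b) n := by
    have := (h' (n - b) hgcd (by push_cast at hn' ⊢; linarith)).horizontal_add
    simpa [add_comm 1] using this
  rcases c.eq_zero_or_pos with rfl | hc
  · rcases le_or_gt n (2 * b) with hn2 | hn2
    · exact hasConvexPath_succ_self (by simpa using hlarge) hn2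
    · exact hshort (by simp; linarith)
  · refine hshort ?_
    have hgcd : (Nat.gcd (b + c) b : ℤ) ≤ b := mod_cast Nat.gcd_le_right _ hb
    push_cast at hlarge
    nlinarith

theorem hasAllConvexPaths (a b : ℕ) : HasAllConvexPaths (a, b) := by
  induction hN : a + b using Nat.strong_induction_on generalizing a b with
  | _ N ih =>
  wlog hba : b ≤ a generalizing a b
  · exact (this b a (by omega) (by omega)).swap
  rcases b with _ | b
  · exact hasAllConvexPaths_zero_right a
  obtain ⟨c, rfl⟩ := Nat.exists_eq_add_of_le hba
  rcases c with _ | c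
  · exact (ih _ (by omega) b (b + 1) rfl).diagonal
  · exact (ih _ (by omega) (c + 1) (b + 1) rfl).offDiagonal b.succ_pos
      (ih _ (by omega) (b + 1 + c) (b + 1) rfl)

end Paths

/-- The list of edges of a Newton boundary: `(u, v)` stands for the step `(u, -v)`, the boundary is
followed from the vertical to the horizontal axis, and its edges do not become steeper. The sign of
`cross` is opposite to that in `IsConvexPath` because the steps are reflected. -/
structure IsNewtonPath (l : List (ℕ × ℕ)) : Prop where
  pos : ∀ e ∈ l, 0 < e.1 ∧ 0 < e.2
  cross_nonpos : l.Pairwise fun e f => cross e f ≤ 0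

/-- The steepness of the step `(e.1, -e.2)`. -/
noncomputable def steepness (e : ℕ × ℕ) : ℝ :=
  e.2 / e.1

/-- The function whose graph over `[0, l.sum.1]` is the descending path with edges `l`, ending at
`(l.sum.1, 0)`. For a Newton path it is the maximum of `0` and of the affine functions extending the
edges, which makes it visibly convex. -/
noncomputable def pathFun : List (ℕ × ℕ) → ℝ → ℝ
  | [], _ => 0
  | e :: l, x => max ((e :: l).sum.2 - steepness e * x) (pathFun l (x - e.1))

/-- The vertices of the descending path with edges `l` from `(0, l.sum.2)` to `(l.sum.1, 0)`. -/
def pathVertices : List (ℕ × ℕ) → Finset (ℕ × ℕ)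
  | [] => {0}
  | e :: l => insert (0, (e :: l).sum.2) ((pathVertices l).image ((e.1, 0) + ·))

/-- The part of the right half-plane above the graph of `pathFun l`. -/
def pathEpigraph (l : List (ℕ × ℕ)) : Set (ℝ × ℝ) :=
  {v | 0 ≤ v.1 ∧ pathFun l v.1 ≤ v.2}

section DescendingPath

lemma steepness_nonneg (e : ℕ × ℕ) : 0 ≤ steepness e := by
  unfold steepness
  positivity

lemma pathFun_nonneg (l : List (ℕ × ℕ)) (x : ℝ) : 0 ≤ pathFun l x := by
  induction l generalizing x with
  | nil => rfl
  | cons e l ih => exact (ih _).trans (le_max_right _ _)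

lemma le_pathFun_of_nonneg {l : List (ℕ × ℕ)} {s x : ℝ} (hs : 0 ≤ s)
    (hl : ∀ e ∈ l, steepness e ≤ s) (hx : 0 ≤ x) : l.sum.2 - s * x ≤ pathFun l x := by
  cases l with
  | nil => simpa [pathFun] using mul_nonneg hs hx
  | cons e l =>
    have hse : steepness e ≤ s := hl e List.mem_cons_self
    exact le_max_of_le_left (by gcongr)

lemma continuous_pathFun (l : List (ℕ × ℕ)) : Continuous (pathFun l) := by
  induction l with
  | nil => exact continuous_const
  | cons e l ih =>
    exact (continuous_const.sub (continuous_const_mul _)).max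
      (ih.comp (continuous_sub_right (e.1 : ℝ)))

lemma antitone_pathFun (l : List (ℕ × ℕ)) : Antitone (pathFun l) := by
  induction l with
  | nil => exact antitone_const
  | cons e l ih =>
    intro x y hxy
    unfold pathFun
    gcongr
    · exact steepness_nonneg e
    · exact ih (by gcongr)

lemma convexOn_pathFun (l : List (ℕ × ℕ)) : ConvexOn ℝ Set.univ (pathFun l) := by
  induction l with
  | nil => exact convexOn_const _ convex_univ
  | cons e l ih =>
    have hline : ConvexOn ℝ Set.univ fun x : ℝ => ((e :: l).sum.2 : ℝ) - steepness e * x :=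
      (convexOn_const _ convex_univ).sub
        ((LinearMap.mul ℝ ℝ (steepness e)).concaveOn convex_univ)
    exact hline.sup (ih.translate_left (-(e.1 : ℝ)))

lemma convex_pathEpigraph (l : List (ℕ × ℕ)) : Convex ℝ (pathEpigraph l) :=
  ((convexOn_pathFun l).subset (Set.subset_univ _) (convex_Ici 0)).convex_epigraph

lemma isUpperSet_pathEpigraph (l : List (ℕ × ℕ)) : IsUpperSet (pathEpigraph l) :=
  fun _ _ hvw hv =>
    ⟨hv.1.trans hvw.1, (antitone_pathFun l hvw.1).trans (hv.2.trans hvw.2)⟩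

lemma left_mem_pathVertices (l : List (ℕ × ℕ)) : (0, l.sum.2) ∈ pathVertices l := by
  cases l <;> simp [pathVertices]

lemma right_mem_pathVertices (l : List (ℕ × ℕ)) : (l.sum.1, 0) ∈ pathVertices l := by
  induction l with
  | nil => simp [pathVertices]
  | cons e l ih =>
    exact Finset.mem_insert_of_mem (Finset.mem_image.2 ⟨_, ih, by simp⟩)

end DescendingPath

namespace IsNewtonPath

variable {e : ℕ × ℕ} {l : List (ℕ × ℕ)} {x : ℝ}

lemma tail (h : IsNewtonPath (e :: l)) : IsNewtonPath l :=
  ⟨fun f hf => h.pos f (List.mem_cons_of_mem _ hf), (List.pairwise_cons.1 h.cross_nonpos).2⟩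

lemma head_pos (h : IsNewtonPath (e :: l)) : (0 : ℝ) < e.1 ∧ (0 : ℝ) < e.2 :=
  mod_cast h.pos e List.mem_cons_self

lemma steepness_mul_head (h : IsNewtonPath (e :: l)) : steepness e * e.1 = e.2 :=
  div_mul_cancel₀ _ h.head_pos.1.ne'

lemma steepness_le_head (h : IsNewtonPath (e :: l)) {f : ℕ × ℕ} (hf : f ∈ l) :
    steepness f ≤ steepness e := by
  have hf1 : (0 : ℝ) < f.1 := mod_cast (h.tail.pos f hf).1
  have hef : (e.1 * f.2 - e.2 * f.1 : ℤ) ≤ 0 := (List.pairwise_cons.1 h.cross_nonpos).1 f hf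
  rw [steepness, steepness, div_le_div_iff₀ hf1 h.head_pos.1]
  norm_cast
  lia

lemma pathFun_le_of_nonpos (h : IsNewtonPath l) {s : ℝ} (hs : 0 ≤ s) (hl : ∀ e ∈ l, steepness e ≤ s)
    (hx : x ≤ 0) : pathFun l x ≤ l.sum.2 - s * x := by
  induction l generalizing s x with
  | nil => simpa [pathFun] using mul_nonpos_of_nonneg_of_nonpos hs hx
  | cons e l ih =>
    have hse : steepness e ≤ s := hl e List.mem_cons_self
    have hline : steepness e * -x ≤ s * -x := by gcongr; linarith
    have htail := ih h.tail (steepness_nonneg e) (fun f hf => h.steepness_le_head hf)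
      (x := x - e.1) (by linarith [h.head_pos.1])
    have hmul := h.steepness_mul_head
    rw [pathFun, List.sum_cons, Prod.snd_add, Nat.cast_add]
    exact max_le (by linarith) (by linarith)

lemma pathFun_cons_of_le (h : IsNewtonPath (e :: l)) (hx : x ≤ e.1) :
    pathFun (e :: l) x = (e :: l).sum.2 - steepness e * x := by
  have htail := h.tail.pathFun_le_of_nonpos (steepness_nonneg e)
    (fun f hf => h.steepness_le_head hf) (sub_nonpos.2 hx)
  have hmul := h.steepness_mul_head
  refine max_eq_left (htail.trans_eq ?_)
  rw [List.sum_cons, Prod.snd_add]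
  push_cast
  linarith

lemma pathFun_cons_of_ge (h : IsNewtonPath (e :: l)) (hx : e.1 ≤ x) :
    pathFun (e :: l) x = pathFun l (x - e.1) := by
  have htail := le_pathFun_of_nonneg (steepness_nonneg e) (fun f hf => h.steepness_le_head hf)
    (sub_nonneg.2 hx)
  have hmul := h.steepness_mul_head
  refine max_eq_right (htail.trans' (le_of_eq ?_))
  rw [List.sum_cons, Prod.snd_add]
  push_cast
  linarith

lemma pathFun_zero (h : IsNewtonPath l) : pathFun l 0 = l.sum.2 := by
  cases l with
  | nil => simp [pathFun]
  | cons e l => simp [h.pathFun_cons_of_le (Nat.cast_nonneg _)]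

lemma pathFun_eq_zero_iff (h : IsNewtonPath l) (hx : 0 ≤ x) : pathFun l x = 0 ↔ l.sum.1 ≤ x := by
  induction l generalizing x with
  | nil => simpa [pathFun] using hx
  | cons e l ih =>
    rw [List.sum_cons, Prod.fst_add, Nat.cast_add]
    rcases lt_or_ge x e.1 with hxe | hxe
    · have hdrop : steepness e * x < e.2 := by
        rw [← h.steepness_mul_head]
        exact mul_lt_mul_of_pos_left hxe (div_pos h.head_pos.2 h.head_pos.1)
      have hpos : 0 < pathFun (e :: l) x := by
        rw [h.pathFun_cons_of_le hxe.le, List.sum_cons, Prod.snd_add, Nat.cast_add]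
        linarith [(Nat.cast_nonneg l.sum.2 : (0 : ℝ) ≤ _)]
      exact iff_of_false hpos.ne' (by linarith [(Nat.cast_nonneg l.sum.1 : (0 : ℝ) ≤ _)])
    · rw [h.pathFun_cons_of_ge hxe, ih h.tail (sub_nonneg.2 hxe), le_sub_iff_add_le']

lemma integral_pathFun (h : IsNewtonPath l) :
    ∫ x in (0 : ℝ)..l.sum.1, pathFun l x = ((l.sum.1 : ℝ) * l.sum.2 + chordArea l) / 2 := by
  induction l with
  | nil => simp [chordArea]
  | cons e l ih =>
    have hint (a b : ℝ) : IntervalIntegrable (pathFun (e :: l)) volume a b :=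
      (continuous_pathFun _).intervalIntegrable a b
    have hhead : ∫ x in (0 : ℝ)..e.1, pathFun (e :: l) x =
        (e :: l).sum.2 * e.1 - e.2 * e.1 / 2 := by
      rw [← h.steepness_mul_head]
      calc ∫ x in (0 : ℝ)..e.1, pathFun (e :: l) x
          = ∫ x in (0 : ℝ)..e.1, ((e :: l).sum.2 - steepness e * x) :=
            intervalIntegral.integral_congr fun x hx =>
              h.pathFun_cons_of_le (Set.uIcc_of_le h.head_pos.1.le ▸ hx).2
        _ = _ := by
          rw [intervalIntegral.integral_sub (by simp)
            (Continuous.intervalIntegrable (by fun_prop) _ _),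
            intervalIntegral.integral_const_mul, integral_id, intervalIntegral.integral_const]
          simp only [sub_zero, List.sum_cons, Prod.snd_add, Nat.cast_add, smul_eq_mul, ne_eq,
            OfNat.ofNat_ne_zero, not_false_eq_true, zero_pow]
          ring
    have htail : ∫ x in (e.1 : ℝ)..(e :: l).sum.1, pathFun (e :: l) x =
        ∫ x in (0 : ℝ)..l.sum.1, pathFun l x := by
      have hle : (e.1 : ℝ) ≤ (e :: l).sum.1 := by simp
      calc ∫ x in (e.1 : ℝ)..(e :: l).sum.1, pathFun (e :: l) x
          = ∫ x in (e.1 : ℝ)..(e :: l).sum.1, pathFun l (x - e.1) :=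
            intervalIntegral.integral_congr fun x hx =>
              h.pathFun_cons_of_ge (Set.uIcc_of_le hle ▸ hx).1
        _ = _ := by simp [intervalIntegral.integral_comp_sub_right (pathFun l)]
    rw [← intervalIntegral.integral_add_adjacent_intervals (hint 0 e.1) (hint _ _), hhead, htail,
      ih h.tail]
    simp only [chordArea, cross, List.sum_cons, Prod.fst_add, Prod.snd_add]
    push_cast
    ring

lemma mem_pathEpigraph (h : IsNewtonPath l) {w : ℕ × ℕ} (hw : w ∈ pathVertices l) :
    ((w.1 : ℝ), (w.2 : ℝ)) ∈ pathEpigraph l := by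
  induction l generalizing w with
  | nil => simp_all [pathVertices, pathEpigraph, pathFun]
  | cons e l ih =>
    simp only [pathVertices, Finset.mem_insert, Finset.mem_image] at hw
    rcases hw with rfl | ⟨w, hw, rfl⟩
    · simp [pathEpigraph, h.pathFun_zero]
    · have hw' := ih h.tail hw
      refine ⟨Nat.cast_nonneg _, ?_⟩
      simpa [h.pathFun_cons_of_ge] using hw'.2

lemma pathEpigraph_subset (h : IsNewtonPath l) {C : Set (ℝ × ℝ)} (hC : Convex ℝ C)
    (hCu : IsUpperSet C) (hl : ∀ w ∈ pathVertices l, ((w.1 : ℝ), (w.2 : ℝ)) ∈ C) :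
    pathEpigraph l ⊆ C := by
  induction l generalizing C with
  | nil =>
    have h0 : (0 : ℝ × ℝ) ∈ C := by simpa [pathVertices, Prod.mk_zero_zero] using hl
    exact fun v hv => hCu (show 0 ≤ v from hv) h0
  | cons e l ih =>
    have hl' (w) (hw : w ∈ pathVertices l) : ((e.1 : ℝ), (0 : ℝ)) + ((w.1 : ℝ), (w.2 : ℝ)) ∈ C := by
      have := hl _ (Finset.mem_insert_of_mem (Finset.mem_image_of_mem ((e.1, 0) + ·) hw))
      simpa using this
    rintro ⟨x, y⟩ ⟨hx, hy⟩
    rcases le_total x e.1 with hxe | hxe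
    · have hstart : ((0 : ℝ), ((e :: l).sum.2 : ℝ)) ∈ C := by
        simpa using hl _ (left_mem_pathVertices (e :: l))
      have hend : ((e.1 : ℝ), (l.sum.2 : ℝ)) ∈ C := by
        simpa using hl' _ (left_mem_pathVertices l)
      have he := h.head_pos.1
      have hconv := hC hstart hend (sub_nonneg.2 (div_le_one_of_le₀ hxe he.le))
        (div_nonneg hx he.le) (sub_add_cancel _ _)
      rw [h.pathFun_cons_of_le hxe] at hy
      refine hCu ⟨?_, ?_⟩ hconv
      · simp [he.ne']
      · refine hy.trans' (le_of_eq ?_)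
        simp only [List.sum_cons, Prod.snd_add, Nat.cast_add, Prod.smul_mk, smul_eq_mul, mul_zero,
          Prod.mk_add_mk, zero_add, steepness]
        ring
    · rw [h.pathFun_cons_of_ge hxe] at hy
      have hsub := ih h.tail (C := (fun v => ((e.1 : ℝ), (0 : ℝ)) + v) ⁻¹' C)
        (hC.translate_preimage_right _) (fun v w hvw hv => hCu (add_le_add_right hvw _) hv) hl'
      simpa using hsub (show (x - e.1, y) ∈ pathEpigraph l from ⟨sub_nonneg.2 hxe, hy⟩)

lemma gammaPlus_pathVertices (h : IsNewtonPath l) :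
    GammaPlus (pathVertices l) = pathEpigraph l :=
  (gammaPlus_subset (convex_pathEpigraph l) (isUpperSet_pathEpigraph l)
    fun _ => h.mem_pathEpigraph).antisymm
  (h.pathEpigraph_subset (convex_gammaPlus _) (isUpperSet_gammaPlus _) fun _ => mem_gammaPlus)

lemma axisA_pathVertices (h : IsNewtonPath l) : axisA (pathVertices l) = l.sum.1 := by
  have hset : {x : ℝ | (x, (0 : ℝ)) ∈ GammaPlus (pathVertices l)} = Set.Ici (l.sum.1 : ℝ) := by
    ext x
    rw [h.gammaPlus_pathVertices]
    constructor
    · exact fun hx => (h.pathFun_eq_zero_iff hx.1).1 (hx.2.antisymm (pathFun_nonneg l x))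
    · intro hx
      have hx0 : 0 ≤ x := (Nat.cast_nonneg _).trans hx
      exact ⟨hx0, ((h.pathFun_eq_zero_iff hx0).2 hx).le⟩
  rw [axisA, hset, csInf_Ici]

lemma axisB_pathVertices (h : IsNewtonPath l) : axisB (pathVertices l) = l.sum.2 := by
  have hset : {y : ℝ | ((0 : ℝ), y) ∈ GammaPlus (pathVertices l)} = Set.Ici (l.sum.2 : ℝ) := by
    ext y
    simp [h.gammaPlus_pathVertices, pathEpigraph, h.pathFun_zero]
  rw [axisB, hset, csInf_Ici]

lemma areaS_pathVertices (h : IsNewtonPath l) :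
    areaS (pathVertices l) = ((l.sum.1 : ℝ) * l.sum.2 + chordArea l) / 2 := by
  have hset : {v : ℝ × ℝ | 0 ≤ v.1 ∧ 0 ≤ v.2} \ GammaPlus (pathVertices l) =
      {v | v.1 ∈ Set.Ico (0 : ℝ) l.sum.1 ∧ v.2 ∈ Set.Ico 0 (pathFun l v.1)} := by
    ext ⟨x, y⟩
    rw [h.gammaPlus_pathVertices]
    have hx (hx : 0 ≤ x) (hy : 0 ≤ y) (hyx : y < pathFun l x) : x < l.sum.1 := by
      by_contra! hlx
      exact (hy.trans_lt hyx).ne' ((h.pathFun_eq_zero_iff hx).2 hlx)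
    simp only [pathEpigraph, Set.mem_sdiff, Set.mem_ofPred_eq, not_and, not_le, Set.mem_Ico]
    grind
  rw [areaS, hset, ← measureReal_def, Measure.volume_eq_prod, measureReal_prod_subgraph volume
    measurableSet_Ico (continuous_pathFun l).measurable (pathFun_nonneg l),
    integral_Ico_eq_integral_Ioc, ← intervalIntegral.integral_of_le (Nat.cast_nonneg _),
    h.integral_pathFun]

lemma newtonNumber_pathVertices (h : IsNewtonPath l) :
    newtonNumber (pathVertices l) = ((l.sum.1 : ℝ) - 1) * (l.sum.2 - 1) + chordArea l := by
  rw [newtonNumber, h.areaS_pathVertices, h.axisA_pathVertices, h.axisB_pathVertices]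
  ring

theorem attainable (h : IsNewtonPath l) :
    Attainable {(l.sum.1, 0), (0, l.sum.2)}
      (((l.sum.1 : ℤ) - 1) * (l.sum.2 - 1) + chordArea l) := by
  refine ⟨pathVertices l, ?_⟩
  have hsub : {(l.sum.1, 0), (0, l.sum.2)} ⊆ pathVertices l := by
    simp [Finset.insert_subset_iff, left_mem_pathVertices, right_mem_pathVertices]
  rw [Finset.union_eq_right.2 hsub, h.newtonNumber_pathVertices]
  push_cast
  rfl

end IsNewtonPath

lemma IsConvexPath.isNewtonPath_map_matrixHom {a b c d : ℕ} (ha : 0 < a) (hb : 0 < b) (hc : 0 < c)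
    (hd : 0 < d) (hdet : (a : ℤ) * d - b * c ≤ 0) {l : List (ℕ × ℕ)} (hl : IsConvexPath l) :
    IsNewtonPath (l.map (matrixHom a b c d)) where
  pos := by
    simp only [List.forall_mem_map, matrixHom_apply]
    rintro ⟨x, y⟩ he
    have hxy : 0 < x ∨ 0 < y := by
      simpa [Nat.pos_iff_ne_zero, imp_iff_not_or] using hl.ne_zero _ he
    rcases hxy with hx | hy <;> constructor <;> positivity
  cross_nonpos := by
    rw [List.pairwise_map]
    refine hl.cross_nonneg.imp fun hef => ?_
    rw [cross_matrixHom]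
    exact mul_nonpos_of_nonpos_of_nonneg hdet hef

theorem HasConvexPath.attainable_matrixHom {a b c d : ℕ} (ha : 0 < a) (hb : 0 < b) (hc : 0 < c)
    (hd : 0 < d) (hdet : (a : ℤ) * d - b * c ≤ 0) {v w : ℕ × ℕ} {n : ℤ} (h : HasConvexPath v n)
    (hw : matrixHom a b c d v = w) :
    Attainable {(w.1, 0), (0, w.2)}
      (((w.1 : ℤ) - 1) * (w.2 - 1) + ((a : ℤ) * d - b * c) * n) := by
  obtain ⟨l, hl, rfl, rfl⟩ := h
  obtain rfl := (map_list_sum _ _).symm.trans hw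
  rw [← chordArea_map_matrixHom]
  exact (hl.isNewtonPath_map_matrixHom ha hb hc hd hdet).attainable

/-- opening terms of the sequence of jumps of Newton numbers for
`tr(p,q)` when `gcd(p,q) = m < p`. -/
theorem stmt_2 (p q k r m : ℕ) (ν : ℤ)
    (hp : 2 ≤ p) (hpq : p ≤ q) (hm : m = Nat.gcd p q) (hmp : m < p)
    (hq : q = k * p + r) (hr0 : 0 < r) (hrp : r < p)
    (hν : ν = ((p : ℤ) - 1) * ((q : ℤ) - 1)) :
    Attainable {(p, 0), (0, q)} ν ∧
    ∀ n : ℤ, ν - (r : ℤ) * ((p : ℤ) - r) ≤ n → n ≤ ν - m →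
      Attainable {(p, 0), (0, q)} n := by
  have hk : 0 < k := by
    rcases k.eq_zero_or_pos with rfl | hk <;> omega
  have hmap : matrixHom 1 1 (k + 1) k (r, p - r) = (p, q) := by
    obtain ⟨s, rfl⟩ := Nat.exists_eq_add_of_le hrp.le
    rw [matrixHom_apply, hq, Nat.add_sub_cancel_left, Prod.mk.injEq]
    constructor <;> ring
  have hattain {d : ℤ} (h : HasConvexPath (r, p - r) d) :
      Attainable {(p, 0), (0, q)} (ν - d) := by
    have := h.attainable_matrixHom one_pos one_pos k.succ_pos hk (by simp) hmap
    simpa [hν, sub_eq_add_neg] using this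
  refine ⟨by simpa using hattain (hasConvexPath_zero _), fun n hn hn' => ?_⟩
  have hgcd : r.gcd (p - r) = m := by
    rw [Nat.gcd_sub_self_right hrp.le, hm, hq, Nat.gcd_comm p]
    simp [Nat.gcd_comm]
  have hpath : HasConvexPath (r, p - r) (ν - n) :=
    hasAllConvexPaths r (p - r) _ (by rw [hgcd]; linarith) (by push_cast [hrp.le]; linarith)
  simpa using hattain hpath
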